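/- For any odd positive integer n and any integer m ≥ 3, there are infinitely many integers d (with all the relevant radicands negative) such that n divides the class number of each of the imaginary quadratic fields ℚ(√d), ℚ(√(d+1)), ℚ(√(d+4)), and ℚ(√(d + 4q^2)) for every odd prime q ≤ m; in particular, for each such d one obtains a tuple of at least π(m) + 2 imaginary quadratic fields whose class numbers are all divisible by n, where π is the prime-counting function. -/

import Mathlib

/-- The quadratic field `ℚ(√d)`, realized as the subfield of `ℂ` generated over `ℚ`
by a complex square root of `d`. -/
noncomputable def Qsqrt (d : ℤ) : IntermediateField ℚ ℂ :=
  IntermediateField.adjoin ℚ {((d : ℂ) ^ ((1 : ℂ) / 2))}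

/-- The class number of `ℚ(√d)`: the order of the ideal class group of its ring of
integers. -/
noncomputable def classNumSqrt (d : ℤ) : ℕ :=
  Nat.card (ClassGroup (NumberField.RingOfIntegers (Qsqrt d)))

def LL (a N : ℤ) : ℕ → ℤ
  | 0 => 2
  | 1 => a
  | (k+2) => a * LL a N (k+1) - N * LL a N k

theorem LL_exp (a N : ℤ) (k : ℕ) :
    (∃ e, LL a N (k+2) = a^(k+2) - (k+2) * N * a^k + N^2*e) ∧
    (∃ e, LL a N (k+3) = a^(k+3) - (k+3) * N * a^(k+1) + N^2*e) := by
  induction k with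
  | zero => exact ⟨⟨0, by simp [LL]; ring⟩, ⟨0, by simp [LL]; ring⟩⟩
  | succ k ih =>
    obtain ⟨⟨e, he⟩, f, hf⟩ := ih
    refine ⟨⟨f, by rw [show k+1+2 = k+3 by ring, hf]; push_cast; ring⟩,
      ⟨a*f + (k+2)*a^k - N*e, ?_⟩⟩
    rw [show k+1+3 = (k+2)+2 by ring, LL, show k+2+1 = k+3 by ring, hf, he]
    push_cast; ring

theorem LL_dvd (a N : ℤ) (k : ℕ) : a ∣ LL a N (2*k+1) := by
  induction k with
  | zero => simp [LL]
  | succ k ih =>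
    rw [show 2*(k+1)+1 = (2*k+1)+2 by ring, LL]
    exact dvd_sub (dvd_mul_right _ _) (ih.mul_left _)

theorem LL_spec (α β : ℂ) (a N : ℤ) (h1 : α + β = a) (h2 : α * β = N) (k : ℕ) :
    α^k + β^k = LL a N k ∧ α^(k+1) + β^(k+1) = LL a N (k+1) := by
  induction k with
  | zero => simp [LL, h1]; norm_num
  | succ k ih =>
    refine ⟨ih.2, ?_⟩
    rw [show k+1+1=k+2 by ring, LL]
    push_cast
    rw [← ih.1, ← ih.2, ← h1, ← h2]; ring

theorem LL_contra (a N t : ℤ) (n p : ℕ) (hp : 3 ≤ p) (hpo : Odd p) (hpn : p ≤ n) (ht : t ≠ 0)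
    (hN : (n+2) * |t|^n < N) (h : LL a N p = t) : False := by
  have hat : a ∣ t := by
    obtain ⟨k, rfl⟩ := hpo
    rw [← h]; exact LL_dvd _ _ _
  have ha0 : a ≠ 0 := by rintro rfl; exact ht (zero_dvd_iff.1 hat)
  have hle : |a| ≤ |t| := Int.le_of_dvd (abs_pos.2 ht) (by simpa using hat)
  have ht1 : 1 ≤ |t| := Int.one_le_abs ht
  have hb : ∀ k ≤ n, |a|^k ≤ |t|^n := fun k hk =>
    (pow_le_pow_left₀ (abs_nonneg _) hle k).trans (pow_le_pow_right₀ ht1 hk)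
  have htn : |t| ≤ |t|^n := le_self_pow₀ ht1 (by omega)
  have hpos : 0 < |t|^n := by positivity
  obtain ⟨k, rfl⟩ : ∃ k, p = k+2 := ⟨p-2, by omega⟩
  obtain ⟨⟨e, he⟩, -⟩ := LL_exp a N k
  rw [h] at he
  have h1 : t = a^(k+2) := by
    have : N ∣ t - a^(k+2) := ⟨-(k+2)*a^k + N*e, by rw [he]; ring⟩
    have h3 : |t - a^(k+2)| < N := by
      have := abs_sub t (a^(k+2))
      rw [abs_pow] at this
      have := hb _ hpn
      nlinarith
    linarith [Int.eq_zero_of_abs_lt_dvd this h3]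
  have hNpos : 0 < N := by nlinarith
  have h2 : N ∣ (k+2) * a^k := by
    refine ⟨e, ?_⟩
    apply mul_left_cancel₀ hNpos.ne'
    linear_combination he - h1
  have h3 : |(k+2) * a^k| < N := by
    rw [abs_mul, abs_pow, abs_of_nonneg (by positivity)]
    have := hb k (by omega)
    have h4 : (k:ℤ)+2 ≤ n := by exact_mod_cast hpn
    have : ((k:ℤ)+2) * |a|^k ≤ n * |t|^n := mul_le_mul h4 this (by positivity) (by positivity)
    linarith
  have h6 := Int.eq_zero_of_abs_lt_dvd h2 h3
  have h5 : a^k ≠ 0 := pow_ne_zero _ ha0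
  have h7 : ((k:ℤ)+2) ≠ 0 := by positivity
  exact mul_ne_zero h7 h5 h6

open ComplexConjugate

theorem sqrt_sq (d : ℤ) : ((d : ℂ) ^ ((1 : ℂ) / 2)) ^ 2 = d := by
  rw [← Complex.cpow_nat_mul]; simp

theorem conj_of_sq (z : ℂ) (d : ℤ) (hd : d < 0) (h : z^2 = d) : conj z = -z := by
  have hre := congrArg Complex.re h
  have him := congrArg Complex.im h
  simp [pow_two] at hre him
  have h1 : z.re * z.im = 0 := by linarith
  have hd' : (d:ℝ) < 0 := by exact_mod_cast hd
  have : z.re = 0 := by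
    rcases mul_eq_zero.1 h1 with h1 | h1
    · exact h1
    · rw [h1] at hre; nlinarith
  apply Complex.ext <;> simp [this]

theorem mem_form (d : ℤ) (hd : d < 0) (v : ℂ) (hv : v ∈ Qsqrt d) :
    ∃ x y : ℚ, v = x + y * ((d : ℂ) ^ ((1 : ℂ) / 2)) := by
  have hz := sqrt_sq d
  unfold Qsqrt at hv
  generalize ((d : ℂ) ^ ((1 : ℂ) / 2)) = z at *
  induction hv using IntermediateField.adjoin_induction with
  | mem x hx => exact ⟨0, 1, by simp at hx; simp [hx]⟩
  | algebraMap x => exact ⟨x, 0, by simp⟩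
  | add x y hx hy h1 h2 =>
    obtain ⟨a, b, rfl⟩ := h1
    obtain ⟨c, e, rfl⟩ := h2
    exact ⟨a + c, b + e, by push_cast; ring⟩
  | inv x hx h1 =>
    obtain ⟨a, b, rfl⟩ := h1
    by_cases h0 : a^2 - d*b^2 = 0
    · have hdq : (d:ℚ) < 0 := by exact_mod_cast hd
      have ha : a = 0 := by
        have : a^2 ≤ 0 := by nlinarith [sq_nonneg b]
        exact pow_eq_zero_iff (two_ne_zero) |>.1 (le_antisymm this (sq_nonneg a))
      have hb : b = 0 := by
        rw [ha] at h0
        have : (d:ℚ) * b^2 = 0 := by linarith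
        rcases mul_eq_zero.1 this with h | h
        · exact absurd h hdq.ne
        · exact pow_eq_zero_iff (two_ne_zero) |>.1 h
      exact ⟨0, 0, by simp [ha, hb]⟩
    · refine ⟨a / (a^2 - d*b^2), -b / (a^2 - d*b^2), ?_⟩
      have h0' : ((a:ℂ)^2 - d*b^2) ≠ 0 := by exact_mod_cast h0
      apply inv_eq_of_mul_eq_one_right
      push_cast
      have h8 : ((a:ℂ) + b * z) * (a / (a^2 - d*b^2) + -b / (a^2 - d*b^2) * z)
          = (a^2 - z^2 * b^2) / (a^2 - d*b^2) := by ring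
      rw [h8, hz, div_self h0']
  | mul x y hx hy h1 h2 =>
    obtain ⟨a, b, rfl⟩ := h1
    obtain ⟨c, e, rfl⟩ := h2
    exact ⟨a * c + b * e * d, a * e + b * c, by push_cast; rw [← hz]; ring⟩

theorem rat_int (x : ℚ) (v : ℂ) (hv : IsIntegral ℤ v) (h : v = x) : ∃ a : ℤ, x = a := by
  rw [h] at hv
  have h2 : IsIntegral ℤ x := by
    have : IsIntegral ℤ (algebraMap ℚ ℂ x) := by simpa using hv
    exact (isIntegral_algebraMap_iff (algebraMap ℚ ℂ).injective).1 this
  obtain ⟨a, ha⟩ := IsIntegrallyClosed.isIntegral_iff.1 h2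
  exact ⟨a, by simp [← ha]⟩

theorem int_data (d : ℤ) (hd : d < 0) (v : ℂ) (hv : v ∈ Qsqrt d) (hi : IsIntegral ℤ v) :
    ∃ a N : ℤ, ∃ y : ℚ, v + conj v = a ∧ v * conj v = N ∧ (a:ℚ)^2 - 4*N = d * y^2 ∧
      2 * v = a + y * ((d : ℂ) ^ ((1 : ℂ) / 2)) := by
  obtain ⟨x, y, hxy⟩ := mem_form d hd v hv
  have hz := sqrt_sq d
  have hc := conj_of_sq _ d hd hz
  generalize ((d : ℂ) ^ ((1 : ℂ) / 2)) = z at *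
  have hcv : conj v = x - y * z := by
    rw [hxy]; simp [hc]; ring
  have hic : IsIntegral ℤ (conj v) := by
    exact hi.map ((starRingEnd ℂ).toIntAlgHom)
  obtain ⟨a, ha⟩ := rat_int (2*x) (v + conj v) (hi.add hic) (by rw [hcv, hxy]; push_cast; ring)
  obtain ⟨N, hN⟩ := rat_int (x^2 - d * y^2) (v * conj v) (hi.mul hic)
    (by rw [hcv, hxy]; push_cast; rw [← hz]; ring)
  have ha' : (2*x:ℂ) = a := by exact_mod_cast ha
  have hN' : (x^2 - d*y^2:ℂ) = N := by exact_mod_cast hN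
  refine ⟨a, N, 2*y, ?_, ?_, ?_, ?_⟩
  · rw [hcv, hxy, ← ha']; ring
  · rw [hcv, hxy, ← hN', ← hz]; ring
  · rw [← ha, ← hN]; ring
  · rw [hxy, ← ha']; push_cast; ring

theorem no3 (d : ℤ) (h3 : ¬ (3:ℤ) ∣ d) (y : ℚ) (h : (d:ℚ) * y^2 = -3) : False := by
  have hd0 : (y.den:ℚ) ≠ 0 := by exact_mod_cast y.den_nz
  have h1 : (d:ℚ) * y.num^2 = -3 * y.den^2 := by
    rw [← Rat.num_div_den y] at h
    field_simp at h
    linarith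
  have h2 : d * y.num^2 = -3 * (y.den:ℤ)^2 := by exact_mod_cast h1
  have p3 : Prime (3:ℤ) := Int.prime_three
  have h4 : (3:ℤ) ∣ y.num := by
    have : (3:ℤ) ∣ d * y.num^2 := ⟨-(y.den:ℤ)^2, by rw [h2]; ring⟩
    exact p3.dvd_of_dvd_pow ((p3.dvd_or_dvd this).resolve_left h3)
  obtain ⟨c, hc⟩ := h4
  have h5 : (3:ℤ) ∣ y.den := by
    have : (3:ℤ) ∣ (y.den:ℤ)^2 := ⟨-d*c^2, by rw [hc] at h2; linarith⟩
    exact p3.dvd_of_dvd_pow this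
  have hcop := y.reduced
  have h6 : 3 ∣ y.num.natAbs := by
    rw [hc, Int.natAbs_mul]; exact dvd_mul_right _ _
  have h7 : 3 ∣ y.den := by exact_mod_cast h5
  have := Nat.dvd_gcd h6 h7
  rw [hcop] at this
  omega

theorem no4 (d : ℤ) (h4 : d % 4 = 1 ∨ d % 4 = 2) (y : ℚ) (h : (d:ℚ) * y^2 = -4) : False := by
  -- w = d*y/2 has w^2 = -d
  have h1 : ((d:ℚ) * y / 2)^2 = ((-d : ℤ) : ℚ) := by
    push_cast
    linear_combination (d/4 : ℚ) * h
  have h2 : IsSquare (((-d : ℤ) : ℚ)) := ⟨(d:ℚ) * y / 2, by rw [← pow_two, h1]⟩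
  rw [Rat.isSquare_intCast_iff] at h2
  obtain ⟨r, hr⟩ := h2
  have : (r * r) % 4 = 0 ∨ (r*r) % 4 = 1 := by
    have : r % 4 = 0 ∨ r % 4 = 1 ∨ r % 4 = 2 ∨ r % 4 = 3 := by omega
    rcases this with h | h | h | h <;> simp [Int.mul_emod, h]
  omega

theorem unit_pm (d : ℤ) (hd : d < 0) (h3 : ¬ (3:ℤ) ∣ d) (h4 : d % 4 = 1 ∨ d % 4 = 2)
    (v w : ℂ) (hv : v ∈ Qsqrt d) (hi : IsIntegral ℤ v) (hw : w ∈ Qsqrt d) (hiw : IsIntegral ℤ w)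
    (hvw : v * w = 1) : v = 1 ∨ v = -1 := by
  obtain ⟨a, N, y, h1, h2, h5, h6⟩ := int_data d hd v hv hi
  obtain ⟨b, M, y', k1, k2, k3, -⟩ := int_data d hd w hw hiw
  have hNM : N * M = 1 := by
    have : (N:ℂ) * M = 1 := by
      rw [← h2, ← k2, show v * conj v * (w * conj w) = (v * w) * conj (v * w) by simp; ring, hvw]
      simp
    exact_mod_cast this
  have hN0 : 0 ≤ N := by
    have : ((N:ℝ):ℂ) = (Complex.normSq v : ℝ) := by
      rw [← Complex.mul_conj, h2]; simp
    have : (N:ℝ) = Complex.normSq v := by exact_mod_cast this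
    have h := Complex.normSq_nonneg v
    rw [← this] at h
    exact_mod_cast h
  have hN : N = 1 := by
    rcases Int.eq_one_or_neg_one_of_mul_eq_one hNM with h | h <;> omega
  subst hN
  have hdq : (d:ℚ) < 0 := by exact_mod_cast hd
  have ha : a^2 ≤ 4 := by
    have : (a:ℚ)^2 ≤ 4 := by push_cast at h5; nlinarith [sq_nonneg y]
    exact_mod_cast this
  have ha1 : a ≤ 2 := by nlinarith
  have ha2 : -2 ≤ a := by nlinarith
  have hy0 : a^2 = 4 → y = 0 := by
    intro h
    have : (a:ℚ)^2 = 4 := by exact_mod_cast h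
    rw [this] at h5
    have h7 : (d:ℚ) * y^2 = 0 := by push_cast at h5; linarith
    rcases mul_eq_zero.1 h7 with h | h
    · exact absurd h hdq.ne
    · exact pow_eq_zero_iff (two_ne_zero) |>.1 h
  interval_cases a
  · right
    rw [hy0 (by norm_num)] at h6
    have : (2:ℂ) * v = 2 * (-1) := by rw [h6]; push_cast; ring
    exact mul_left_cancel₀ two_ne_zero this
  · exact (no3 d h3 y (by rw [← h5]; norm_num)).elim
  · exact (no4 d h4 y (by rw [← h5]; norm_num)).elim
  · exact (no3 d h3 y (by rw [← h5]; norm_num)).elim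
  · left
    rw [hy0 (by norm_num)] at h6
    have : (2:ℂ) * v = 2 * 1 := by rw [h6]; push_cast; ring
    exact mul_left_cancel₀ two_ne_zero this

open NumberField nonZeroDivisors in
theorem main_dvd (n : ℕ) (hn : Odd n) (d t W : ℤ) (r : ℚ) (hd : d < 0) (h3 : ¬ (3:ℤ) ∣ d)
    (h4 : d % 4 = 1 ∨ d % 4 = 2) (hr : (d:ℚ) * r^2 = t^2 - 4 * W^n) (ht : t ≠ 0)
    (hcop : IsCoprime t W) (hW : (n+2) * |t|^n < W) : n ∣ classNumSqrt d := by
  have hz := sqrt_sq d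
  have hc := conj_of_sq _ d hd hz
  have hzint : IsIntegral ℚ ((d : ℂ) ^ ((1 : ℂ) / 2)) := by
    have : IsIntegral ℚ (((d : ℂ) ^ ((1 : ℂ) / 2))^2) := by
      rw [hz]
      have h := isIntegral_algebraMap (R := ℚ) (A := ℂ) (x := (d:ℚ))
      rwa [map_intCast] at h
    exact this.of_pow two_pos
  have : FiniteDimensional ℚ (Qsqrt d) := IntermediateField.adjoin.finiteDimensional hzint
  have : NumberField (Qsqrt d) := ⟨⟩
  have hzm : ((d : ℂ) ^ ((1 : ℂ) / 2)) ∈ Qsqrt d :=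
    IntermediateField.subset_adjoin _ _ rfl
  have hnpos : 0 < n := hn.pos
  have hWpos : 0 < W := by
    have : 0 ≤ (n+2) * |t|^n := by positivity
    linarith
  unfold classNumSqrt
  -- the element
  obtain ⟨bC, hbC⟩ : ∃ b : ℂ, b = (t + r * ((d : ℂ) ^ ((1 : ℂ) / 2))) / 2 := ⟨_, rfl⟩
  have hrC : (d:ℂ) * r^2 = t^2 - 4 * W^n := by exact_mod_cast hr
  have hconj : conj bC = t - bC := by
    rw [hbC, map_div₀, map_add, map_mul, hc, map_intCast, map_ratCast, Complex.conj_ofNat]; ring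
  have hprod : bC * (t - bC) = (W:ℂ)^n := by
    rw [hbC]
    linear_combination (-(r:ℂ)^2/4) * hz - hrC/4
  have hbm : bC ∈ Qsqrt d := by
    rw [hbC]
    refine div_mem (add_mem (intCast_mem _ _) (mul_mem ?_ hzm)) (ofNat_mem _ 2)
    exact (Qsqrt d).algebraMap_mem r
  have hbi : IsIntegral ℤ bC := by
    refine ⟨Polynomial.X^2 - Polynomial.C t * Polynomial.X + Polynomial.C (W^n), by monicity!, ?_⟩
    simp only [Polynomial.eval₂_add, Polynomial.eval₂_sub, Polynomial.eval₂_mul, Polynomial.eval₂_X_pow,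
      Polynomial.eval₂_C, Polynomial.eval₂_X]
    simp only [eq_intCast, Int.cast_pow]
    linear_combination -hprod
  have toC : ∀ v : 𝓞 (Qsqrt d), IsIntegral ℤ ((v : Qsqrt d) : ℂ) := fun v =>
    v.isIntegral_coe.map ((Qsqrt d).val.restrictScalars ℤ)
  have hinj : ∀ v w : 𝓞 (Qsqrt d), ((v : Qsqrt d) : ℂ) = ((w : Qsqrt d) : ℂ) → v = w :=
    fun v w h => RingOfIntegers.ext (Subtype.ext h)
  have hbi' : IsIntegral ℤ (⟨bC, hbm⟩ : Qsqrt d) :=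
    (isIntegral_algHom_iff ((Qsqrt d).val.restrictScalars ℤ) Subtype.val_injective).1 hbi
  obtain ⟨β, hβ⟩ : ∃ β : 𝓞 (Qsqrt d), ((β : Qsqrt d) : ℂ) = bC := ⟨⟨⟨bC, hbm⟩, hbi'⟩, rfl⟩
  have hprodO : β * (t - β) = (W : 𝓞 (Qsqrt d))^n := by
    apply hinj
    push_cast
    rw [hβ]
    simpa using hprod
  have hW0 : (W : 𝓞 (Qsqrt d)) ≠ 0 := by exact_mod_cast hWpos.ne'
  have hβ0 : β ≠ 0 := by
    rintro rfl
    rw [zero_mul] at hprodO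
    exact pow_ne_zero n hW0 hprodO.symm
  have hcopI : IsCoprime (Ideal.span {β}) (Ideal.span {(t:𝓞 (Qsqrt d)) - β}) := by
    rw [Ideal.isCoprime_span_singleton_iff]
    obtain ⟨x, y, hxy⟩ := hcop.pow_right (n := n)
    have hxy' : (x : 𝓞 (Qsqrt d)) * t + y * W^n = 1 := by exact_mod_cast congrArg (Int.cast : ℤ → 𝓞 (Qsqrt d)) hxy
    exact ⟨x + y * (t - β), x, by rw [← hxy', ← hprodO]; ring⟩
  obtain ⟨A, hA⟩ := exists_eq_pow_of_mul_eq_pow_of_coprime (n := n) (c := Ideal.span {(W:𝓞 (Qsqrt d))}) hcopI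
    (by rw [Ideal.span_singleton_mul_span_singleton, Ideal.span_singleton_pow, hprodO])
  have hA0 : A ∈ (Ideal (𝓞 (Qsqrt d)))⁰ := by
    rw [mem_nonZeroDivisors_iff_ne_zero]
    rintro rfl
    rw [zero_pow hnpos.ne'] at hA
    exact hβ0 (Ideal.span_singleton_eq_bot.1 hA)
  have hord : orderOf (ClassGroup.mk0 ⟨A, hA0⟩) = n := by
    have key : ∀ k : ℕ, (ClassGroup.mk0 ⟨A, hA0⟩)^k = 1 ↔ (A^k).IsPrincipal := by
      intro k
      rw [← map_pow, ← ClassGroup.mk0_eq_one_iff (pow_mem hA0 k)]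
      rfl
    apply orderOf_eq_of_pow_and_pow_div_prime hnpos
    · rw [key, ← hA]; exact ⟨⟨β, rfl⟩⟩
    · intro p hp hpn h1
      rw [key] at h1
      obtain ⟨⟨α, hα⟩⟩ := h1
      have hα' : A^(n/p) = Ideal.span {α} := hα
      have hpo : Odd p := hn.of_dvd_nat hpn
      have hp3 : 3 ≤ p := by
        have := hp.two_le
        rcases hpo with ⟨k, hk⟩
        omega
      have h2 : Ideal.span {α^p} = Ideal.span {β} := by
        rw [← Ideal.span_singleton_pow, ← hα', ← pow_mul, Nat.div_mul_cancel hpn, ← hA]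
      rw [Ideal.span_singleton_eq_span_singleton] at h2
      obtain ⟨u, hu⟩ := h2
      have hupm : (u : 𝓞 (Qsqrt d)) = 1 ∨ (u : 𝓞 (Qsqrt d)) = -1 := by
        have := unit_pm d hd h3 h4 (((u : 𝓞 (Qsqrt d)) : Qsqrt d) : ℂ)
          ((((u⁻¹ : (𝓞 (Qsqrt d))ˣ) : 𝓞 (Qsqrt d)) : Qsqrt d) : ℂ)
          (Subtype.prop _) (toC _) (Subtype.prop _) (toC _) (by
            simp)
        rcases this with h | h
        · left; apply hinj; simpa using h
        · right; apply hinj; simpa using h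
      obtain ⟨γ, hγ⟩ : ∃ γ : 𝓞 (Qsqrt d), γ^p = β := by
        rcases hupm with h | h
        · exact ⟨α, by rw [← hu, h, mul_one]⟩
        · exact ⟨-α, by rw [hpo.neg_pow, ← hu, h]; ring⟩
      obtain ⟨g, hg⟩ : ∃ g : ℂ, ((γ : Qsqrt d) : ℂ) = g := ⟨_, rfl⟩
      have hgp : g^p = bC := by
        rw [← hg, ← hβ, ← hγ]; push_cast; rfl
      obtain ⟨a, N, y, e1, e2, -, -⟩ := int_data d hd g (hg ▸ Subtype.prop _) (hg ▸ toC γ)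
      have hLL : LL a N p = t := by
        have h := (LL_spec g (conj g) a N e1 e2 p).1
        rw [← map_pow, hgp, hconj] at h
        have : (t:ℂ) = LL a N p := by rw [← h]; ring
        exact_mod_cast this.symm
      have hN0 : 0 ≤ N := by
        have h : ((N:ℝ):ℂ) = (Complex.normSq g : ℝ) := by
          rw [← Complex.mul_conj, e2]; simp
        have h' : (N:ℝ) = Complex.normSq g := by exact_mod_cast h
        have h := Complex.normSq_nonneg g
        rw [← h'] at h
        exact_mod_cast h
      have hNp : N^p = (W^(n/p))^p := by
        rw [← pow_mul, Nat.div_mul_cancel hpn]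
        have : (N:ℂ)^p = (W:ℂ)^n := by
          rw [← e2, mul_pow, ← map_pow, hgp, hconj, hprod]
        exact_mod_cast this
      have hNW : N = W^(n/p) := (pow_left_inj₀ hN0 (by positivity) hp.ne_zero).1 hNp
      have hWN : W ≤ N := by
        rw [hNW]
        exact le_self_pow₀ (by omega) (Nat.div_pos (Nat.le_of_dvd hnpos hpn) hp.pos).ne'
      exact LL_contra a N t n p hp3 hpo (Nat.le_of_dvd hnpos hpn) ht (by linarith) hLL
  calc n = _ := hord.symm
    _ ∣ _ := orderOf_dvd_natCard _

/-- For any odd positive integer `n` and any integer `m ≥ 3`, there are infinitely many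
integers `d` (with all relevant radicands negative) such that `n` divides the class
numbers of `ℚ(√d)`, `ℚ(√(d+1))`, `ℚ(√(d+4))`, and `ℚ(√(d+4q²))` for every odd prime
`q ≤ m`; this yields tuples of at least `π(m) + 2` imaginary quadratic fields whose class
numbers are all divisible by `n`. -/
theorem infinite_tuples_classNumber_dvd
    (n m : ℕ) (hn : Odd n) (hnpos : 0 < n) (hm : 3 ≤ m) :
    {d : ℤ | d < 0 ∧ d + 1 < 0 ∧ d + 4 < 0 ∧
      (∀ q : ℕ, q.Prime → Odd q → q ≤ m → d + 4 * (q : ℤ) ^ 2 < 0) ∧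
      n ∣ classNumSqrt d ∧ n ∣ classNumSqrt (d + 1) ∧ n ∣ classNumSqrt (d + 4) ∧
      (∀ q : ℕ, q.Prime → Odd q → q ≤ m →
        n ∣ classNumSqrt (d + 4 * (q : ℤ) ^ 2))}.Infinite := by
  refine Set.infinite_of_forall_exists_lt fun b => ?_
  -- a large multiple of 3 * m!
  obtain ⟨B, hB⟩ : ∃ B : ℤ, B = (n+2) * (4*m)^n + 4 * m^2 + 4 + |b| := ⟨_, rfl⟩
  have hB1 : (n+2) * (4*(m:ℤ))^n + 4 * (m:ℤ)^2 + 4 + |b| ≤ B := hB.ge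
  have hp0 : 0 ≤ (n+2) * (4*(m:ℤ))^n := by positivity
  have hp1 : 0 ≤ 4 * (m:ℤ)^2 := by positivity
  have hp2 := abs_nonneg b
  have hp3 := neg_abs_le b
  have hfac : (1:ℤ) ≤ (m.factorial : ℤ) := by exact_mod_cast m.factorial_pos
  obtain ⟨V, hV⟩ : ∃ V : ℤ, V = 3 * m.factorial * B := ⟨_, rfl⟩
  have hVB : B ≤ V := by rw [hV]; nlinarith
  have hVn : V ≤ V^n := le_self_pow₀ (by linarith) hnpos.ne'
  obtain ⟨U, hU⟩ : ∃ U : ℤ, U = 4 * V^n - 1 := ⟨_, rfl⟩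
  have hUB : B < U := by linarith
  have hUn : U ≤ U^n := le_self_pow₀ (by linarith) hnpos.ne'
  have hU4 : U^n ≡ -1 [ZMOD 4] := by
    have : U ≡ -1 [ZMOD 4] := (Int.modEq_iff_dvd.2 ⟨-V^n, by rw [hU]; ring⟩)
    simpa [hn.neg_one_pow] using this.pow n
  have hV3 : (3:ℤ) ∣ V^n := dvd_pow ⟨m.factorial * B, by rw [hV]; ring⟩ hnpos.ne'
  have hU3 : U^n ≡ -1 [ZMOD 3] := by
    have : U ≡ -1 [ZMOD 3] := by
      obtain ⟨c, hc⟩ := hV3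
      exact (Int.modEq_iff_dvd.2 ⟨-4*c, by rw [hU, hc]; ring⟩)
    simpa [hn.neg_one_pow] using this.pow n
  -- shifted radicands
  have shift : ∀ s : ℕ, 0 < s → s ≤ 2*m → (s = 1 ∨ Even s) → (2 * (s:ℤ)) ∣ U + 1 →
      (s:ℤ)^2 < U^n → n ∣ classNumSqrt (-U^n + (s:ℤ)^2) := by
    intro s hs hsm hse hdv hlt
    refine main_dvd n hn _ (2*s) U 2 (by linarith) ?_ ?_ ?_ (by positivity) ?_ ?_
    · intro h
      unfold Int.ModEq at hU3
      have : ((s:ℤ)^2) % 3 = 0 ∨ ((s:ℤ)^2) % 3 = 1 := by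
        have : (s:ℤ) % 3 = 0 ∨ (s:ℤ) % 3 = 1 ∨ (s:ℤ) % 3 = 2 := by omega
        rcases this with h | h | h <;> simp [pow_two, Int.mul_emod, h]
      omega
    · unfold Int.ModEq at hU4
      rcases hse with rfl | ⟨k, rfl⟩
      · right; push_cast; omega
      · left
        have : (((k+k:ℕ):ℤ))^2 = 4 * (k:ℤ)^2 := by push_cast; ring
        rw [this]; omega
    · push_cast; ring
    · obtain ⟨c, hc⟩ := hdv
      exact ⟨c, -1, by linarith⟩
    · have h1 : |2*(s:ℤ)| ≤ 4*m := by
        rw [abs_of_nonneg (by positivity)]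
        have : (s:ℤ) ≤ 2*m := by exact_mod_cast hsm
        linarith
      have h2 : |2*(s:ℤ)|^n ≤ (4*(m:ℤ))^n := pow_le_pow_left₀ (abs_nonneg _) h1 n
      have h3 : (n+2) * |2*(s:ℤ)|^n ≤ (n+2) * (4*(m:ℤ))^n :=
        mul_le_mul_of_nonneg_left h2 (by positivity)
      linarith
  have hV4 : U + 1 = 4 * V^n := by rw [hU]; ring
  have hV2 : (4:ℤ) ∣ U + 1 := ⟨_, hV4⟩
  have qb : ∀ q : ℕ, q ≤ m → 4 * (q:ℤ)^2 < U^n := by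
    intro q hq
    have : (q:ℤ)^2 ≤ (m:ℤ)^2 := pow_le_pow_left₀ (by positivity) (by exact_mod_cast hq) 2
    linarith
  refine ⟨-U^n, ⟨by linarith, by linarith, by linarith, ?_, ?_, ?_, ?_, ?_⟩, by linarith⟩
  · intro q _ _ hq
    linarith [qb q hq]
  · obtain ⟨j, hj⟩ := hn
    have hU0 : (U:ℚ) ≠ 0 := by
      have : U ≠ 0 := by linarith
      exact_mod_cast this
    refine main_dvd n ⟨j, hj⟩ _ 1 V (1 / U^j) (by linarith) ?_ ?_ ?_ one_ne_zero isCoprime_one_left ?_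
    · intro h
      unfold Int.ModEq at hU3
      omega
    · unfold Int.ModEq at hU4
      omega
    · have hUQ : (U:ℚ) = 4 * V^n - 1 := by exact_mod_cast hU
      have : ((-U^n : ℤ):ℚ) * (1 / (U:ℚ)^j)^2 = -U := by
        push_cast
        rw [hj]
        field_simp
        ring
      rw [this, hUQ]; push_cast; ring
    · have : (1:ℤ) ≤ (4*(m:ℤ))^n := one_le_pow₀ (by omega)
      have : ((n:ℤ)+2) * 1 ≤ (n+2) * (4*(m:ℤ))^n :=
        mul_le_mul_of_nonneg_left this (by positivity)
      simp only [abs_one, one_pow]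
      linarith
  · have := shift 1 one_pos (by omega) (Or.inl rfl) (by push_cast; omega) (by push_cast; linarith)
    simpa using this
  · have := shift 2 two_pos (by omega) (Or.inr even_two) (by push_cast; omega) (by push_cast; linarith)
    norm_num at this
    exact this
  · intro q hq _ hqm
    have := shift (2*q) (by have := hq.pos; omega) (by omega) (Or.inr (even_two_mul q)) (by
      have h1 : (q:ℤ) ∣ V^n := by
        refine dvd_pow ?_ hnpos.ne'
        have : (q:ℤ) ∣ (m.factorial : ℤ) := by exact_mod_cast hq.dvd_factorial.2 hqm
        rw [hV]
        exact (this.mul_left 3).mul_right B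
      rw [hV4]
      push_cast
      rw [← mul_assoc]
      exact mul_dvd_mul (by norm_num) h1) (by push_cast; linarith [qb q hqm])
    rw [show -U^n + 4*(q:ℤ)^2 = -U^n + ((2*q:ℕ):ℤ)^2 by push_cast; ring]
    exact this
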